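/- Let A be a finite-dimensional left Leibniz algebra over a field F of characteristic zero, let B be a subalgebra of A, and let B̲ be the subalgebra of B generated by all subinvariant subalgebras of A contained in B. Then B̲ is an ideal of B. -/

import Mathlib

open Submodule

section LeibnizDefs

variable {F : Type*} {A : Type*} [Field F] [AddCommGroup A] [Module F A]

/-- The span of all products `b*c` with `b ∈ B`, `c ∈ C`. -/
def mulSub (mul : A →ₗ[F] A →ₗ[F] A) (B C : Submodule F A) : Submodule F A :=
  Submodule.span F {z : A | ∃ b ∈ B, ∃ c ∈ C, mul b c = z}

/-- `fSub mul B C = B·C + C·B`, the function `f(B,C)`. -/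
def fSub (mul : A →ₗ[F] A →ₗ[F] A) (B C : Submodule F A) : Submodule F A :=
  mulSub mul B C ⊔ mulSub mul C B

/-- `fIter mul B C n = f^{n+1}(B,C)` (so index `0` is `f^1(B,C) = f(B,C)`). -/
def fIter (mul : A →ₗ[F] A →ₗ[F] A) (B C : Submodule F A) : ℕ → Submodule F A
  | 0 => fSub mul B C
  | n + 1 => fSub mul B (fIter mul B C n)

/-- `lcs mul B n = B^{n+1}`, the lower central series (index `0` is `B^1 = B`). -/
def lcs (mul : A →ₗ[F] A →ₗ[F] A) (B : Submodule F A) : ℕ → Submodule F A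
  | 0 => B
  | n + 1 => mulSub mul B (lcs mul B n)

/-- `ds mul B n = B^{(n+1)}`, the derived series (index `0` is `B^{(1)} = B`). -/
def ds (mul : A →ₗ[F] A →ₗ[F] A) (B : Submodule F A) : ℕ → Submodule F A
  | 0 => B
  | n + 1 => mulSub mul (ds mul B n) (ds mul B n)

/-- `B^ω = ⋂_{i ≥ 1} B^i`. -/
def omegaSub (mul : A →ₗ[F] A →ₗ[F] A) (B : Submodule F A) : Submodule F A :=
  ⨅ n, lcs mul B n

/-- `B` is a subalgebra: a subspace closed under multiplication. -/
def IsSubalg (mul : A →ₗ[F] A →ₗ[F] A) (B : Submodule F A) : Prop :=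
  ∀ x ∈ B, ∀ y ∈ B, mul x y ∈ B

/-- `I` is an ideal of the subalgebra `S`: `I ⊆ S` and `xI + Ix ⊆ I` for all `x ∈ S`. -/
def IsIdealIn (mul : A →ₗ[F] A →ₗ[F] A) (I S : Submodule F A) : Prop :=
  I ≤ S ∧ ∀ x ∈ S, ∀ y ∈ I, mul x y ∈ I ∧ mul y x ∈ I

/-- `B` is subinvariant in `S`: there is a chain of subalgebras
`B = c 0 ⊆ c 1 ⊆ ⋯ ⊆ c t = S` with each term an ideal of the next. -/
def IsSubinvariantIn (mul : A →ₗ[F] A →ₗ[F] A) (B S : Submodule F A) : Prop :=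
  ∃ (t : ℕ) (c : ℕ → Submodule F A), c 0 = B ∧ c t = S ∧
    (∀ i ≤ t, IsSubalg mul (c i)) ∧ ∀ i < t, IsIdealIn mul (c i) (c (i + 1))

/-- `B` is nilpotent: `B^m = 0` for some `m`. -/
def IsNilpotentSub (mul : A →ₗ[F] A →ₗ[F] A) (B : Submodule F A) : Prop :=
  ∃ m, lcs mul B m = ⊥

/-- `B` is solvable: `B^{(m)} = 0` for some `m`. -/
def IsSolvableSub (mul : A →ₗ[F] A →ₗ[F] A) (B : Submodule F A) : Prop :=
  ∃ m, ds mul B m = ⊥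

/-- The centralizer `Z_A(B) = {x : xb = 0 = bx for all b ∈ B}`. -/
def centralizerSet (mul : A →ₗ[F] A →ₗ[F] A) (B : Submodule F A) : Set A :=
  {x : A | ∀ b ∈ B, mul x b = 0 ∧ mul b x = 0}

/-- `R` is the radical (the maximal solvable ideal) of the subalgebra `S`. -/
def IsRadicalIn (mul : A →ₗ[F] A →ₗ[F] A) (S R : Submodule F A) : Prop :=
  IsIdealIn mul R S ∧ IsSolvableSub mul R ∧
    ∀ T, IsIdealIn mul T S → IsSolvableSub mul T → T ≤ R

/-- `N` is the nilradical (the maximal nilpotent ideal) of the subalgebra `S`. -/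
def IsNilradicalIn (mul : A →ₗ[F] A →ₗ[F] A) (S N : Submodule F A) : Prop :=
  IsIdealIn mul N S ∧ IsNilpotentSub mul N ∧
    ∀ T, IsIdealIn mul T S → IsNilpotentSub mul T → T ≤ N

/-- `H` is a Cartan subalgebra: a nilpotent self-normalizing subalgebra. -/
def IsCartan (mul : A →ₗ[F] A →ₗ[F] A) (H : Submodule F A) : Prop :=
  IsSubalg mul H ∧ IsNilpotentSub mul H ∧
    ∀ x : A, (∀ h ∈ H, mul x h ∈ H ∧ mul h x ∈ H) → x ∈ H

/-- The subalgebra generated by a set: the smallest subalgebra containing it. -/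
def subalgGen (mul : A →ₗ[F] A →ₗ[F] A) (s : Set A) : Submodule F A :=
  sInf {S : Submodule F A | IsSubalg mul S ∧ s ⊆ (S : Set A)}

end LeibnizDefs

section Helpers

attribute [local instance] LieRing.ofAssociativeRing

open Polynomial in
theorem h_nil_of_trace {F V : Type*} [Field F] [CharZero F] [AddCommGroup V] [Module F V]
    [FiniteDimensional F V] (f : Module.End F V)
    (h : ∀ n : ℕ, LinearMap.trace F V (f ^ (n + 1)) = 0) : IsNilpotent f := by
  have hm : minpoly F f ≠ 0 := minpoly.ne_zero (Algebra.IsIntegral.isIntegral f)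
  obtain ⟨g, hg, hnd⟩ := exists_eq_pow_rootMultiplicity_mul_and_not_dvd (minpoly F f) hm 0
  set m := (minpoly F f).rootMultiplicity 0
  rw [C_0, sub_zero] at hg hnd
  have hcop : IsCoprime (X ^ (m + 1)) g :=
    IsCoprime.pow_left ((Irreducible.coprime_iff_not_dvd irreducible_X).2 hnd)
  obtain ⟨u, v, huv⟩ := hcop
  have hz : aeval f (X ^ (m + 1) * g) = 0 := by
    rw [pow_succ', mul_assoc, ← hg, map_mul, minpoly.aeval, mul_zero]
  have hidem : IsIdempotentElem (aeval f (u * X ^ (m + 1))) := by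
    unfold IsIdempotentElem
    have : u * X ^ (m + 1) * (u * X ^ (m + 1)) =
        u * X ^ (m + 1) - u * v * (X ^ (m + 1) * g) := by
      linear_combination (u * X ^ (m + 1)) * huv
    rw [← map_mul, this, map_sub, map_mul _ (u * v), hz, mul_zero, sub_zero]
  have htr : ∀ p : F[X], LinearMap.trace F V (aeval f (p * X ^ (m + 1))) = 0 := by
    intro p
    induction p using Polynomial.induction_on' with
    | add p q hp hq => rw [add_mul, map_add, map_add, hp, hq, add_zero]
    | monomial n a =>
      rw [← C_mul_X_pow_eq_monomial, mul_assoc, ← pow_add, ← add_assoc, map_mul, aeval_C, map_pow,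
        aeval_X, ← Algebra.smul_def, map_smul, h, smul_zero]
  have he : aeval f (u * X ^ (m + 1)) = 0 :=
    (LinearMap.IsIdempotentElem.trace_eq_zero_iff hidem).1 (htr u)
  refine ⟨m + 1, ?_⟩
  have h1 : (X ^ (m + 1) : F[X]) = X ^ (m + 1) * (u * X ^ (m + 1)) + v * (X ^ (m + 1) * g) := by
    linear_combination (-X ^ (m + 1)) * huv
  have h2 := congrArg (aeval f) h1
  rw [map_add, map_mul, map_mul _ v, he, hz, mul_zero, mul_zero, add_zero, map_pow, aeval_X] at h2
  exact h2

variable {F V : Type*} [Field F] [AddCommGroup V] [Module F V]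

/-- Iterated images of `V` under a set of operators. -/
def hFlag (Y : Set (Module.End F V)) : ℕ → Submodule F V
  | 0 => ⊤
  | n + 1 => Submodule.span F {z | ∃ y ∈ Y, ∃ v ∈ hFlag Y n, y v = z}

theorem hFlag_mem {Y : Set (Module.End F V)} {n : ℕ} {y : Module.End F V} (hy : y ∈ Y) {v : V}
    (hv : v ∈ hFlag Y n) : y v ∈ hFlag Y (n + 1) :=
  Submodule.subset_span ⟨y, hy, v, hv, rfl⟩

theorem hFlag_inv {Y G : Set (Module.End F V)}
    (hc : ∀ g ∈ G, ∀ y ∈ Y, g * y - y * g ∈ Y) (n : ℕ) :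
    ∀ g ∈ G, ∀ v ∈ hFlag Y n, g v ∈ hFlag Y n := by
  induction n with
  | zero => intro g _ v _; exact Submodule.mem_top
  | succ n ih =>
    intro g hg v hv
    have : hFlag Y (n + 1) ≤ (hFlag Y (n + 1)).comap g := by
      refine Submodule.span_le.2 ?_
      rintro _ ⟨y, hy, w, hw, rfl⟩
      have h1 : g (y w) = (g * y - y * g) w + y (g w) := by simp
      change g (y w) ∈ hFlag Y (n + 1)
      rw [h1]
      exact add_mem (hFlag_mem (hc g hg y hy) hw) (hFlag_mem hy (ih g hg w hw))
    exact this hv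

theorem hFlag_trace {Y G : Set (Module.End F V)}
    (hc : ∀ g ∈ G, ∀ y ∈ Y, g * y - y * g ∈ Y) {k : ℕ} (hk : hFlag Y k = ⊥)
    {y z : Module.End F V} (hy : y ∈ Y) (hz : z ∈ Algebra.adjoin F G) :
    LinearMap.trace F V (y * z) = 0 := by
  have hinv : ∀ n, ∀ v ∈ hFlag Y n, z v ∈ hFlag Y n := by
    intro n
    induction hz using Algebra.adjoin_induction with
    | mem g hg => exact hFlag_inv hc n g hg
    | algebraMap r => intro v hv; exact Submodule.smul_mem _ r hv
    | add a b _ _ ha hb => intro v hv; exact add_mem (ha v hv) (hb v hv)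
    | mul a b _ _ ha hb => intro v hv; exact ha _ (hb v hv)
  have hp : ∀ n v, ((y * z) ^ n) v ∈ hFlag Y n := by
    intro n
    induction n with
    | zero => intro v; exact Submodule.mem_top
    | succ n ih =>
      intro v
      rw [pow_succ']
      exact hFlag_mem hy (hinv n _ (ih v))
  have hn : IsNilpotent (y * z) := by
    refine ⟨k, ?_⟩
    ext v
    have := hp k v
    rw [hk] at this
    simpa using this
  exact (LinearMap.isNilpotent_trace_of_isNilpotent hn).eq_zero

/-- The radical of the trace form on the associative algebra generated by `G`. -/
def hRad (G : Set (Module.End F V)) : Submodule F (Module.End F V) where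
  carrier := {y | y ∈ Algebra.adjoin F G ∧ ∀ z ∈ Algebra.adjoin F G, LinearMap.trace F V (y * z) = 0}
  add_mem' := by
    rintro a b ⟨ha, ha'⟩ ⟨hb, hb'⟩
    exact ⟨add_mem ha hb, fun z hz => by rw [add_mul, map_add, ha' z hz, hb' z hz, add_zero]⟩
  zero_mem' := ⟨zero_mem _, fun z _ => by simp⟩
  smul_mem' := by
    rintro c a ⟨ha, ha'⟩
    exact ⟨Subalgebra.smul_mem _ ha c, fun z hz => by rw [smul_mul_assoc, map_smul, ha' z hz, smul_zero]⟩

theorem hRad_mul_right {G : Set (Module.End F V)} {y x : Module.End F V} (hy : y ∈ hRad G)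
    (hx : x ∈ Algebra.adjoin F G) : y * x ∈ hRad G :=
  ⟨mul_mem hy.1 hx, fun z hz => by rw [mul_assoc]; exact hy.2 _ (mul_mem hx hz)⟩

theorem hRad_mul_left {G : Set (Module.End F V)} {y x : Module.End F V} (hy : y ∈ hRad G)
    (hx : x ∈ Algebra.adjoin F G) : x * y ∈ hRad G :=
  ⟨mul_mem hx hy.1, fun z hz => by
    rw [mul_assoc, LinearMap.trace_mul_comm, mul_assoc]; exact hy.2 _ (mul_mem hz hx)⟩

theorem hRad_flag [CharZero F] [FiniteDimensional F V] (G : Set (Module.End F V)) :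
    ∃ k, hFlag (hRad G : Set (Module.End F V)) k = ⊥ := by
  let L : LieSubalgebra F (Module.End F V) :=
    { hRad G with
      lie_mem' := by
        intro x y hx hy
        change x * y - y * x ∈ hRad G
        exact sub_mem (hRad_mul_right hx hy.1) (hRad_mul_right hy hx.1) }
  have hnil : LieModule.IsNilpotent L V := by
    rw [LieModule.isNilpotent_iff_forall (R := F)]
    rintro ⟨x, hx⟩
    change IsNilpotent x
    have hx' : x ∈ hRad G := hx
    apply h_nil_of_trace
    intro n
    rw [pow_succ']
    exact hx'.2 _ (pow_mem hx'.1 n)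
  obtain ⟨k, hk⟩ := (LieModule.isNilpotent_iff F L V).1 hnil
  have hle : ∀ n, hFlag (hRad G : Set (Module.End F V)) n ≤
      (LieModule.lowerCentralSeries F L V n).toSubmodule := by
    intro n
    induction n with
    | zero => simp [hFlag]
    | succ n ih =>
      refine Submodule.span_le.2 ?_
      rintro _ ⟨y, hy, w, hw, rfl⟩
      rw [LieModule.lowerCentralSeries_succ]
      exact LieSubmodule.lie_mem_lie (LieSubmodule.mem_top (⟨y, hy⟩ : L)) (ih hw)
  refine ⟨k, ?_⟩
  have := hle k
  rw [hk] at this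
  simpa using this

/-- Passing from an ideal to the bigger algebra. -/
theorem hRad_step [CharZero F] [FiniteDimensional F V] {G H : Set (Module.End F V)} (hGH : G ⊆ H)
    (hc : ∀ h ∈ H, ∀ g ∈ G, h * g - g * h ∈ G) : hRad G ≤ hRad H := by
  have hX : ∀ h ∈ H, ∀ z ∈ Algebra.adjoin F G, h * z - z * h ∈ Algebra.adjoin F G := by
    intro h hh z hz
    induction hz using Algebra.adjoin_induction with
    | mem g hg => exact Algebra.subset_adjoin (hc h hh g hg)
    | algebraMap r =>
      rw [Algebra.commutes r h, sub_self]; exact zero_mem _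
    | add a b _ _ ha hb =>
      have : h * (a + b) - (a + b) * h = (h * a - a * h) + (h * b - b * h) := by noncomm_ring
      rw [this]; exact add_mem ha hb
    | mul a b ha' hb' ha hb =>
      have : h * (a * b) - (a * b) * h = (h * a - a * h) * b + a * (h * b - b * h) := by
        noncomm_ring
      rw [this]; exact add_mem (mul_mem ha hb') (mul_mem ha' hb)
  have hT : ∀ h ∈ H, ∀ y ∈ (hRad G : Set (Module.End F V)),
      h * y - y * h ∈ (hRad G : Set (Module.End F V)) := by
    rintro h hh y ⟨hy, hy'⟩
    refine ⟨hX h hh y hy, fun z hz => ?_⟩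
    have e : (h * y - y * h) * z = (h * (y * z) - (y * z) * h) - y * (h * z - z * h) := by
      noncomm_ring
    rw [e, map_sub, map_sub, LinearMap.trace_mul_comm F h, sub_self, hy' _ (hX h hh z hz), sub_zero]
  obtain ⟨k, hk⟩ := hRad_flag G
  intro y hy
  exact ⟨Algebra.adjoin_mono hGH hy.1, fun z hz => hFlag_trace hT hk hy hz⟩

end Helpers

section LeibnizHelpers

variable {F : Type*} {A : Type*} [Field F] [AddCommGroup A] [Module F A]
  {mul : A →ₗ[F] A →ₗ[F] A}

theorem mulSub_mem {B C : Submodule F A} {b c : A} (hb : b ∈ B) (hc : c ∈ C) :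
    mul b c ∈ mulSub mul B C := Submodule.subset_span ⟨b, hb, c, hc, rfl⟩

theorem mulSub_le {B C D : Submodule F A} (h : ∀ b ∈ B, ∀ c ∈ C, mul b c ∈ D) :
    mulSub mul B C ≤ D := by
  refine Submodule.span_le.2 ?_
  rintro _ ⟨b, hb, c, hc, rfl⟩
  exact h b hb c hc

theorem lcs_le_self {S : Submodule F A} (hS : IsSubalg mul S) (n : ℕ) : lcs mul S n ≤ S := by
  induction n with
  | zero => exact le_rfl
  | succ n ih => exact mulSub_le fun b hb c hc => hS b hb c (ih hc)

theorem lcs_succ_le {S : Submodule F A} (hS : IsSubalg mul S) (n : ℕ) :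
    lcs mul S (n + 1) ≤ lcs mul S n := by
  induction n with
  | zero => exact lcs_le_self hS 1
  | succ n ih => exact mulSub_le fun b hb c hc => mulSub_mem hb (ih hc)

theorem lcs_anti {S : Submodule F A} (hS : IsSubalg mul S) : Antitone (lcs mul S) :=
  antitone_nat_of_succ_le (lcs_succ_le hS)

theorem lcs_mul (hleib : ∀ x y z : A, mul x (mul y z) = mul (mul x y) z + mul y (mul x z))
    {S : Submodule F A} (i : ℕ) : ∀ j, ∀ x ∈ lcs mul S i, ∀ y ∈ lcs mul S j,
      mul x y ∈ lcs mul S (i + j + 1) := by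
  induction i with
  | zero => intro j x hx y hy; rw [zero_add]; exact mulSub_mem hx hy
  | succ i ih =>
    intro j x hx y hy
    have : lcs mul S (i + 1) ≤ (lcs mul S (i + 1 + j + 1)).comap (mul.flip y) := by
      refine mulSub_le fun b hb c hc => ?_
      change mul (mul b c) y ∈ lcs mul S (i + 1 + j + 1)
      have e : mul (mul b c) y = mul b (mul c y) - mul c (mul b y) := by
        rw [hleib b c y]; abel
      rw [e]
      refine sub_mem ?_ ?_
      · have := mulSub_mem (mul := mul) hb (ih j c hc y hy)
        rw [show i + 1 + j + 1 = (i + j + 1) + 1 by ring]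
        exact this
      · have := ih (j + 1) c hc (mul b y) (mulSub_mem hb hy)
        rw [show i + 1 + j + 1 = i + (j + 1) + 1 by ring]
        exact this
    exact this hx

/-- `E_0 = A`, `E_{n+1} = S E_n + E_n S`. -/
def hE (mul : A →ₗ[F] A →ₗ[F] A) (S : Submodule F A) : ℕ → Submodule F A
  | 0 => ⊤
  | n + 1 => fSub mul S (hE mul S n)

theorem hE_left {S : Submodule F A} {n : ℕ} {s e : A} (hs : s ∈ S) (he : e ∈ hE mul S n) :
    mul s e ∈ hE mul S (n + 1) :=
  (le_sup_left : mulSub mul S (hE mul S n) ≤ _) (mulSub_mem hs he)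

theorem hE_right {S : Submodule F A} {n : ℕ} {s e : A} (hs : s ∈ S) (he : e ∈ hE mul S n) :
    mul e s ∈ hE mul S (n + 1) :=
  (le_sup_right : mulSub mul (hE mul S n) S ≤ _) (mulSub_mem he hs)

theorem hE_lcs (hleib : ∀ x y z : A, mul x (mul y z) = mul (mul x y) z + mul y (mul x z))
    {S : Submodule F A} (n : ℕ) : ∀ k, ∀ x ∈ lcs mul S n, ∀ e ∈ hE mul S k,
      mul x e ∈ hE mul S (k + n + 1) ∧ mul e x ∈ hE mul S (k + n + 1) := by
  induction n with
  | zero => intro k x hx e he; exact ⟨hE_left hx he, hE_right hx he⟩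
  | succ n ih =>
    intro k x hx e he
    have h1 : lcs mul S (n + 1) ≤ (hE mul S (k + n + 1 + 1)).comap (mul.flip e) := by
      refine mulSub_le fun b hb c hc => ?_
      change mul (mul b c) e ∈ hE mul S (k + n + 1 + 1)
      have e1 : mul (mul b c) e = mul b (mul c e) - mul c (mul b e) := by
        rw [hleib b c e]; abel
      rw [e1]
      refine sub_mem (hE_left hb (ih k c hc e he).1) ?_
      have := (ih (k + 1) c hc (mul b e) (hE_left hb he)).1
      rwa [show k + 1 + n + 1 = k + n + 1 + 1 by ring] at this
    have h2 : lcs mul S (n + 1) ≤ (hE mul S (k + n + 1 + 1)).comap (mul e) := by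
      refine mulSub_le fun b hb c hc => ?_
      change mul e (mul b c) ∈ hE mul S (k + n + 1 + 1)
      rw [hleib e b c]
      refine add_mem ?_ (hE_left hb (ih k c hc e he).2)
      have := (ih (k + 1) c hc (mul e b) (hE_right hb he)).2
      rwa [show k + 1 + n + 1 = k + n + 1 + 1 by ring] at this
    exact ⟨h1 hx, h2 hx⟩

theorem chain_le {t : ℕ} {c : ℕ → Submodule F A}
    (hc : ∀ i < t, IsIdealIn mul (c i) (c (i + 1))) (i : ℕ) (hi : i ≤ t) : c 0 ≤ c i := by
  induction i with
  | zero => exact le_rfl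
  | succ i ih => exact (ih (by omega)).trans (hc i (by omega)).1

theorem hE_chain {t : ℕ} {c : ℕ → Submodule F A} (ht : c t = ⊤)
    (hc : ∀ i < t, IsIdealIn mul (c i) (c (i + 1))) (i : ℕ) (hi : i ≤ t) :
    hE mul (c 0) i ≤ c (t - i) := by
  induction i with
  | zero => rw [Nat.sub_zero, ht]; exact le_top
  | succ i ih =>
    have hid := hc (t - (i + 1)) (by omega)
    rw [show t - (i + 1) + 1 = t - i by omega] at hid
    have hle := chain_le hc (t - (i + 1)) (by omega)
    have ih' := ih (by omega)
    exact sup_le (mulSub_le fun b hb x hx => (hid.2 x (ih' hx) b (hle hb)).2)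
      (mulSub_le fun x hx b hb => (hid.2 x (ih' hx) b (hle hb)).1)

theorem hE_le_lcs (hleib : ∀ x y z : A, mul x (mul y z) = mul (mul x y) z + mul y (mul x z))
    {S : Submodule F A} {t : ℕ} (ht : hE mul S t ≤ S) (k : ℕ) :
    hE mul S (t + k) ≤ lcs mul S k := by
  induction k with
  | zero => exact ht
  | succ k ih =>
    exact sup_le (mulSub_le fun b hb x hx => mulSub_mem hb (ih hx))
      (mulSub_le fun x hx b hb => lcs_mul hleib k 0 x (ih hx) b hb)

theorem subinv_cons {I J S : Submodule F A} (hI : IsSubalg mul I) (hIJ : IsIdealIn mul I J)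
    (hJ : IsSubinvariantIn mul J S) : IsSubinvariantIn mul I S := by
  obtain ⟨t, c, h0, ht, hs, hid⟩ := hJ
  refine ⟨t + 1, fun n => Nat.casesOn n I c, rfl, ht, ?_, ?_⟩
  · rintro (_ | i) hi
    · exact hI
    · exact hs i (by omega)
  · rintro (_ | i) hi
    · change IsIdealIn mul I (c 0)
      rw [h0]; exact hIJ
    · exact hid i (by omega)

/-- A subalgebra of an ideal `N` that contains some term of the lower central series of `N`
is subinvariant. -/
theorem subinv_of_lcs (hleib : ∀ x y z : A, mul x (mul y z) = mul (mul x y) z + mul y (mul x z))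
    {N M : Submodule F A} (hN : IsIdealIn mul N ⊤) (hM : IsSubalg mul M) (hMN : M ≤ N)
    {k : ℕ} (hk : lcs mul N k ≤ M) : IsSubinvariantIn mul M ⊤ := by
  have hNs : IsSubalg mul N := fun x _ y hy => (hN.2 x trivial y hy).1
  have key : ∀ j, ∀ x ∈ M ⊔ lcs mul N j, ∀ y ∈ M ⊔ lcs mul N (j + 1),
      mul x y ∈ M ⊔ lcs mul N (j + 1) ∧ mul y x ∈ M ⊔ lcs mul N (j + 1) := by
    intro j x hx y hy
    obtain ⟨m, hm, n, hn, rfl⟩ := Submodule.mem_sup.1 hx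
    obtain ⟨m', hm', n', hn', rfl⟩ := Submodule.mem_sup.1 hy
    have l : lcs mul N (j + 1) ≤ M ⊔ lcs mul N (j + 1) := le_sup_right
    have l' : M ≤ M ⊔ lcs mul N (j + 1) := le_sup_left
    have hn'' := lcs_succ_le hNs j hn'
    have a1 : ∀ p ∈ N, ∀ q ∈ lcs mul N j, mul p q ∈ lcs mul N (j + 1) := fun p hp q hq =>
      mulSub_mem hp hq
    have a2 : ∀ p ∈ N, ∀ q ∈ lcs mul N j, mul q p ∈ lcs mul N (j + 1) := fun p hp q hq =>
      lcs_mul hleib j 0 q hq p hp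
    simp only [map_add, LinearMap.add_apply]
    refine ⟨add_mem (add_mem ?_ ?_) (add_mem ?_ ?_), add_mem (add_mem ?_ ?_) (add_mem ?_ ?_)⟩
    · exact l' (hM _ hm _ hm')
    · exact l (a2 _ (hMN hm') _ hn)
    · exact l (a1 _ (hMN hm) _ hn'')
    · exact l (a1 _ (lcs_le_self hNs _ hn) _ hn'')
    · exact l' (hM _ hm' _ hm)
    · exact l (a2 _ (hMN hm) _ hn'')
    · exact l (a1 _ (hMN hm') _ hn)
    · exact l (a2 _ (lcs_le_self hNs _ hn) _ hn'')
  have hmono : ∀ j, M ⊔ lcs mul N (j + 1) ≤ M ⊔ lcs mul N j := fun j =>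
    sup_le_sup_left (lcs_succ_le hNs j) M
  have hall : ∀ j, IsSubinvariantIn mul (M ⊔ lcs mul N j) ⊤ := by
    intro j
    induction j with
    | zero =>
      have : M ⊔ lcs mul N 0 = N := sup_eq_right.2 hMN
      rw [this]
      exact subinv_cons hNs hN ⟨0, fun _ => ⊤, rfl, rfl, fun _ _ _ _ _ _ => trivial,
        fun i hi => absurd hi (by omega)⟩
    | succ j ih =>
      exact subinv_cons (fun x hx y hy => (key j x (hmono j hx) y hy).1)
        ⟨hmono j, fun x hx y hy => key j x hx y hy⟩ ih
  have := hall k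
  rwa [sup_eq_left.2 hk] at this

/-- The induced left representation on a quotient by a left-invariant subspace. -/
def hRho (mul : A →ₗ[F] A →ₗ[F] A) (W : Submodule F A) (h : ∀ a : A, W ≤ W.comap (mul a)) :
    A →ₗ[F] Module.End F (A ⧸ W) where
  toFun a := W.mapQ W (mul a) (h a)
  map_add' a b := by ext x; simp
  map_smul' r a := by ext x; simp

theorem exists_good_ideal [CharZero F] [FiniteDimensional F A]
    (hleib : ∀ x y z : A, mul x (mul y z) = mul (mul x y) z + mul y (mul x z))
    {S : Submodule F A} (hS : IsSubinvariantIn mul S ⊤) :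
    ∃ N : Submodule F A, ∃ k, IsIdealIn mul N ⊤ ∧ S ≤ N ∧ lcs mul N k ≤ S := by
  obtain ⟨t, c, rfl, ht, hs, hid⟩ := hS
  have hSs := hs 0 (Nat.zero_le t)
  have hEt : hE mul (c 0) t ≤ c 0 := by simpa using hE_chain ht hid t le_rfl
  obtain ⟨m, hm⟩ : ∃ m, ∀ n, m ≤ n → lcs mul (c 0) m = lcs mul (c 0) n :=
    IsArtinian.monotone_stabilizes
      (⟨fun n => OrderDual.toDual (lcs mul (c 0) n), lcs_anti hSs⟩ : ℕ →o (Submodule F A)ᵒᵈ)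
  set W := lcs mul (c 0) m with hW
  have hWle : W ≤ c 0 := lcs_le_self hSs m
  have hWid : ∀ a : A, W ≤ W.comap (mul a) := by
    intro a w hw
    rw [hm (m + t) (by omega)] at hw
    have := (hE_lcs hleib (m + t) 0 w hw a trivial).2
    rw [show 0 + (m + t) + 1 = t + (m + 1) by ring] at this
    have := hE_le_lcs hleib hEt (m + 1) this
    rwa [← hm (m + 1) (by omega)] at this
  let ρ := hRho mul W hWid
  have hρ : ∀ x y, ρ (mul x y) = ρ x * ρ y - ρ y * ρ x := by
    intro x y
    ext z
    have : mul (mul x y) z = mul x (mul y z) - mul y (mul x z) := by rw [hleib x y z]; abel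
    change W.mkQ (mul (mul x y) z) = W.mkQ (mul x (mul y z)) - W.mkQ (mul y (mul x z))
    rw [this, map_sub]
  let T : ℕ → Submodule F (Module.End F (A ⧸ W)) := fun i => hRad (ρ '' (c i : Set A))
  -- base of the induction
  have hflag : ∀ n, hFlag (ρ '' (c 0 : Set A)) n ≤ (hE mul (c 0) n).map W.mkQ := by
    intro n
    induction n with
    | zero => simp [hFlag, hE]
    | succ n ih =>
      refine Submodule.span_le.2 ?_
      rintro _ ⟨_, ⟨s, hs, rfl⟩, w, hw, rfl⟩
      obtain ⟨e, he, rfl⟩ := ih hw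
      exact ⟨mul s e, hE_left hs he, rfl⟩
  have hflag0 : hFlag (ρ '' (c 0 : Set A)) (t + m) = ⊥ := by
    rw [eq_bot_iff]
    refine (hflag _).trans ?_
    rw [Submodule.map_le_iff_le_comap]
    intro x hx
    have := hE_le_lcs hleib hEt m hx
    simpa using this
  have hbase : ∀ s ∈ c 0, ρ s ∈ T 0 := by
    intro s hs
    refine ⟨Algebra.subset_adjoin ⟨s, hs, rfl⟩, fun z hz => ?_⟩
    refine hFlag_trace ?_ hflag0 (Set.mem_image_of_mem ρ hs) hz
    rintro _ ⟨a, ha, rfl⟩ _ ⟨b, hb, rfl⟩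
    exact ⟨mul a b, hSs a ha b hb, hρ a b⟩
  have hall : ∀ i ≤ t, ∀ s ∈ c 0, ρ s ∈ T i := by
    intro i
    induction i with
    | zero => intro _; exact hbase
    | succ i ih =>
      intro hi s hs
      refine hRad_step (Set.image_mono (hid i (by omega)).1) ?_ (ih (by omega) s hs)
      rintro _ ⟨a, ha, rfl⟩ _ ⟨b, hb, rfl⟩
      exact ⟨mul a b, ((hid i (by omega)).2 a ha b hb).1, hρ a b⟩
  have hadj : ∀ a, ρ a ∈ Algebra.adjoin F (ρ '' (c t : Set A)) := fun a =>
    Algebra.subset_adjoin ⟨a, by rw [ht]; trivial, rfl⟩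
  obtain ⟨k, hk⟩ := hRad_flag (ρ '' (c t : Set A))
  have hNl : ∀ n, lcs mul ((T t).comap ρ) n ≤ (hFlag (T t : Set (Module.End F (A ⧸ W))) n).comap W.mkQ := by
    intro n
    induction n with
    | zero => intro x _; exact Submodule.mem_top
    | succ n ih =>
      refine mulSub_le fun b hb x hx => ?_
      exact hFlag_mem (show ρ b ∈ (T t : Set _) from hb) (ih hx)
  refine ⟨(T t).comap ρ, k, ⟨le_top, fun x _ y hy => ?_⟩, hall t le_rfl, ?_⟩
  · have hy' : ρ y ∈ T t := hy
    have h1 := hRad_mul_left hy' (hadj x)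
    have h2 := hRad_mul_right hy' (hadj x)
    constructor
    · change ρ (mul x y) ∈ T t
      rw [hρ]; exact sub_mem h1 h2
    · change ρ (mul y x) ∈ T t
      rw [hρ]; exact sub_mem h2 h1
  · intro x hx
    have := hNl k hx
    rw [hk] at this
    exact hWle (by simpa using this)

end LeibnizHelpers

/-- over characteristic zero, the subalgebra generated by all
subinvariant subalgebras of `A` contained in a subalgebra `B` is an ideal of
`B`. -/
theorem stmt_19 {F A : Type*} [Field F] [CharZero F]
    [AddCommGroup A] [Module F A] [FiniteDimensional F A]
    (mul : A →ₗ[F] A →ₗ[F] A)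
    (hleib : ∀ x y z : A, mul x (mul y z) = mul (mul x y) z + mul y (mul x z))
    (B : Submodule F A) (hB : IsSubalg mul B) :
    IsIdealIn mul
      (subalgGen mul
        (⋃ S ∈ {S : Submodule F A | IsSubinvariantIn mul S ⊤ ∧ S ≤ B}, (S : Set A)))
      B := by
  set U : Set A := ⋃ S ∈ {S : Submodule F A | IsSubinvariantIn mul S ⊤ ∧ S ≤ B}, (S : Set A)
    with hU
  have hUG : U ⊆ (subalgGen mul U : Set A) := by
    intro x hx
    exact (Submodule.mem_sInf).2 fun S hS => hS.2 hx
  have hGmin : ∀ S, IsSubalg mul S → U ⊆ (S : Set A) → subalgGen mul U ≤ S :=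
    fun S h1 h2 => sInf_le ⟨h1, h2⟩
  have hGs : IsSubalg mul (subalgGen mul U) := by
    intro x hx y hy
    exact (Submodule.mem_sInf).2 fun S hS =>
      hS.1 x ((Submodule.mem_sInf).1 hx S hS) y ((Submodule.mem_sInf).1 hy S hS)
  have hUB : U ⊆ (B : Set A) := by
    intro x hx
    simp only [hU, Set.mem_iUnion, Set.mem_ofPred_eq, exists_prop] at hx
    obtain ⟨S, ⟨_, hSB⟩, hxS⟩ := hx
    exact hSB hxS
  have hGB := hGmin B hB hUB
  have hgen : ∀ s ∈ U, ∀ b ∈ B, mul b s ∈ subalgGen mul U ∧ mul s b ∈ subalgGen mul U := by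
    intro s hs b hb
    have hsU := hs
    simp only [hU, Set.mem_iUnion, Set.mem_ofPred_eq, exists_prop] at hs
    obtain ⟨S, ⟨hS, hSB⟩, hxS⟩ := hs
    obtain ⟨N, k, hN, hSN, hk⟩ := exists_good_ideal hleib hS
    have hM : IsSubalg mul (N ⊓ B) := fun x hx y hy =>
      ⟨(hN.2 x trivial y hy.1).1, hB x hx.2 y hy.2⟩
    have hMsub := subinv_of_lcs hleib hN hM inf_le_left (hk.trans (le_inf hSN hSB))
    have hMU : ∀ x ∈ N ⊓ B, x ∈ subalgGen mul U := by
      intro x hx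
      apply hUG
      simp only [hU, Set.mem_iUnion, Set.mem_ofPred_eq, exists_prop]
      exact ⟨N ⊓ B, ⟨hMsub, inf_le_right⟩, hx⟩
    have h := hN.2 b trivial s (hSN hxS)
    exact ⟨hMU _ ⟨h.1, hB b hb s (hSB hxS)⟩, hMU _ ⟨h.2, hB s (hSB hxS) b hb⟩⟩
  let P : Submodule F A :=
    { carrier := {y | y ∈ subalgGen mul U ∧
        ∀ b ∈ B, mul b y ∈ subalgGen mul U ∧ mul y b ∈ subalgGen mul U}
      add_mem' := by
        rintro x y ⟨hx, hx'⟩ ⟨hy, hy'⟩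
        refine ⟨add_mem hx hy, fun b hb => ?_⟩
        rw [map_add, map_add, LinearMap.add_apply]
        exact ⟨add_mem (hx' b hb).1 (hy' b hb).1, add_mem (hx' b hb).2 (hy' b hb).2⟩
      zero_mem' := by
        refine ⟨zero_mem _, fun b _ => ?_⟩
        simp
      smul_mem' := by
        rintro r x ⟨hx, hx'⟩
        refine ⟨Submodule.smul_mem _ r hx, fun b hb => ?_⟩
        rw [map_smul, map_smul, LinearMap.smul_apply]
        exact ⟨Submodule.smul_mem _ r (hx' b hb).1, Submodule.smul_mem _ r (hx' b hb).2⟩ }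
  have hP : IsSubalg mul P := by
    rintro x ⟨hx, hx'⟩ y ⟨hy, hy'⟩
    refine ⟨hGs x hx y hy, fun b hb => ⟨?_, ?_⟩⟩
    · rw [hleib b x y]
      exact add_mem (hGs _ (hx' b hb).1 _ hy) (hGs _ hx _ (hy' b hb).1)
    · have e : mul (mul x y) b = mul x (mul y b) - mul y (mul x b) := by
        rw [hleib x y b]; abel
      rw [e]
      exact sub_mem (hGs _ hx _ (hy' b hb).2) (hGs _ hy _ (hx' b hb).2)
  have hGP := hGmin P hP fun s hs => ⟨hUG hs, hgen s hs⟩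
  exact ⟨hGB, fun x hx y hy => (hGP hy).2 x hx⟩
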